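/- arXiv:1407.3927 — 3 statements merged into one kernel-verified Lean document; each statement's English description precedes it below -/
import Mathlib

section
/- Let d ≥ 1, let h = (h₁,…,h_d) satisfy 0 < h₁ ≤ ⋯ ≤ h_d ≤ 1, and let ε > 0. Then κ(h, ε) > 2ε / (M₂(h) + 2ε²), where M₂(h) := sup { sup_{t ≥ 0} |p''(t)| : p ∈ P_h, sup_{t ≥ 0} |p(t)| ≤ 1 } is the sharp constant in the second-order Markov–Bernstein inequality for P_h. -/
/-- The sup of `|p|` over the half-line `[0, ∞)`. -/
noncomputable def supAbs (p : ℝ → ℝ) : ℝ :=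
  sSup ((fun t => |p t|) '' Set.Ici (0 : ℝ))

/-- The space `P_h` of exponential polynomials with exponents `h₁ ≤ ⋯ ≤ h_d`:
the span of the functions `t^m * exp (-h i * t)`, where `m` is the number of
indices `j < i` with `h j = h i`. -/
def expPoly (d : ℕ) (h : Fin d → ℝ) : Set (ℝ → ℝ) :=
  {p | ∃ c : Fin d → ℝ, ∀ t : ℝ,
      p t = ∑ i : Fin d,
        c i * t ^ (Nat.card {j : Fin d // j < i ∧ h j = h i}) * Real.exp (-(h i) * t)}

/-- `κ(h, ε)`: the infimum of `(1 − p(0)) / (p'(0) − ε p(0))` over all `p ∈ P_h`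
with `sup_{t ≥ 0} |p(t)| ≤ 1` and `p'(0) > ε p(0)`. -/
noncomputable def kappa (d : ℕ) (h : Fin d → ℝ) (ε : ℝ) : ℝ :=
  sInf {y : ℝ | ∃ p ∈ expPoly d h, supAbs p ≤ 1 ∧ ε * p 0 < deriv p 0 ∧
      y = (1 - p 0) / (deriv p 0 - ε * p 0)}

/-- `M₂(h)`: the sharp constant in the second-order Markov–Bernstein inequality
for `P_h`, i.e. `sup { sup_{t≥0} |p''| : p ∈ P_h, sup_{t≥0} |p| ≤ 1 }`. -/
noncomputable def M2 (d : ℕ) (h : Fin d → ℝ) : ℝ :=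
  sSup {M : ℝ | ∃ p ∈ expPoly d h, supAbs p ≤ 1 ∧ M = supAbs (iteratedDeriv 2 p)}

/-!
For `p ∈ P_h` with `‖p‖ ≤ 1`, the function `p(t) + M₂ t² / 2` is convex on `[0, ∞)`, so it lies
above its tangent at `0`. At `t = 2ε / M₂`, where `p ≤ 1`, this rearranges to
`2ε (p'(0) - ε p(0)) ≤ (M₂ + 2ε²) (1 - p(0))`. Equality would force `p` to agree with a parabola
on an interval, hence everywhere by analyticity, which is impossible for a bounded function.
The strict inequality survives the infimum because the unit ball of `P_h` is compact: in the
topology of pointwise convergence on `[0, ∞)` it is a closed subset of the cube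
`[-1, 1]^[0, ∞)`.
-/

open Filter Polynomial Set Topology

section StrictTaylor

variable {f : ℝ → ℝ} {x y M : ℝ}

theorem eq_tangent_of_convexOn_Ici (hf : AnalyticOnNhd ℝ f univ) (hconv : ConvexOn ℝ (Ici x) f)
    (hxy : x < y) (hle : f y ≤ f x + deriv f x * (y - x)) (z : ℝ) :
    f z = f x + deriv f x * (z - x) := by
  suffices f = fun z ↦ f x + deriv f x * (z - x) from congrFun this z
  have hdiff : DifferentiableAt ℝ f x := (hf x trivial).differentiableAt
  obtain ⟨w, hxw, hwy⟩ := exists_between hxy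
  refine hf.eq_of_eventuallyEq (fun t _ ↦ by fun_prop) (z₀ := w) ?_
  filter_upwards [Ioo_mem_nhds hxw hwy] with z ⟨hxz, hzy⟩
  have hlower : deriv f x ≤ (f z - f x) / (z - x) := by
    simpa only [slope_def_field] using
      hconv.deriv_le_slope self_mem_Ici hxz.le hxz hdiff
  have hupper : (f z - f x) / (z - x) ≤ (f y - f x) / (y - x) :=
    hconv.secant_mono self_mem_Ici hxz.le hxy.le hxz.ne' hxy.ne' hzy.le
  have hslope : (f y - f x) / (y - x) ≤ deriv f x := by
    rw [div_le_iff₀ (sub_pos.2 hxy)]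
    linarith
  have heq : (f z - f x) / (z - x) = deriv f x := (hupper.trans hslope).antisymm hlower
  rw [div_eq_iff (sub_pos.2 hxz).ne'] at heq
  linarith

theorem convexOn_add_sq_of_neg_le_iteratedDeriv_two (hf : ContDiff ℝ 2 f)
    (hM : ∀ t ∈ Ioi x, -M ≤ iteratedDeriv 2 f t) :
    ConvexOn ℝ (Ici x) fun t ↦ f t + M / 2 * (t - x) ^ 2 := by
  have hsq : ContDiff ℝ 2 fun t : ℝ ↦ M / 2 * (t - x) ^ 2 := by fun_prop
  have hderiv2_sq (t : ℝ) : iteratedDeriv 2 (fun t : ℝ ↦ M / 2 * (t - x) ^ 2) t = M := by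
    have hderiv_sq : deriv (fun t : ℝ ↦ M / 2 * (t - x) ^ 2) = fun t ↦ M * (t - x) :=
      funext fun t ↦ ((((hasDerivAt_id' t).sub_const x).fun_pow 2).const_mul (M / 2)).deriv.trans
        (by ring)
    rw [iteratedDeriv_succ, iteratedDeriv_one, hderiv_sq]
    simp
  have hsum : ContDiff ℝ 2 fun t ↦ f t + M / 2 * (t - x) ^ 2 := hf.add hsq
  refine convexOn_of_deriv2_nonneg (convex_Ici x) hsum.continuous.continuousOn
    (hsum.differentiable two_ne_zero).differentiableOn
    (hsum.differentiable_deriv_two).differentiableOn fun t ht ↦ ?_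
  rw [interior_Ici] at ht
  have hderiv2 : iteratedDeriv 2 (fun t ↦ f t + M / 2 * (t - x) ^ 2) t
      = iteratedDeriv 2 f t + M := by
    rw [iteratedDeriv_fun_add hf.contDiffAt hsq.contDiffAt, hderiv2_sq]
  rw [← iteratedDeriv_eq_iterate, hderiv2]
  linarith [hM t ht]

theorem not_bddBelow_concave_quadratic (hM : 0 < M) (a b : ℝ) :
    ¬ BddBelow ((fun t ↦ a + b * (t - x) - M / 2 * (t - x) ^ 2) '' Ici x) := by
  rintro ⟨m, hm⟩
  have hlim : Tendsto (fun u ↦ u * (b - M / 2 * u)) atTop atBot :=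
    tendsto_id.atTop_mul_atBot₀ <| tendsto_atBot_add_const_left _ b <|
      tendsto_neg_atTop_atBot.comp <| tendsto_id.const_mul_atTop (half_pos hM)
  obtain ⟨u, hu, hum⟩ := ((eventually_ge_atTop 0).and (hlim.eventually_lt_atBot (m - a))).exists
  have hmu := hm (mem_image_of_mem _ (show x + u ∈ Ici x by simpa using hu))
  simp only [add_sub_cancel_left] at hmu
  linarith

theorem quadratic_lt_of_neg_le_iteratedDeriv_two (hf : AnalyticOnNhd ℝ f univ)
    (hbdd : BddBelow (f '' Ici x)) (hM : 0 < M)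
    (hf2 : ∀ t ∈ Ioi x, -M ≤ iteratedDeriv 2 f t) (hxy : x < y) :
    f x + deriv f x * (y - x) - M / 2 * (y - x) ^ 2 < f y := by
  by_contra! hle
  have hanalytic : AnalyticOnNhd ℝ (fun t ↦ f t + M / 2 * (t - x) ^ 2) univ := fun t _ ↦
    (hf t trivial).add (by fun_prop)
  have hderiv : deriv (fun t ↦ f t + M / 2 * (t - x) ^ 2) x = deriv f x := by
    rw [deriv_fun_add (hf x trivial).differentiableAt (by fun_prop)]
    simp
  have htangent := eq_tangent_of_convexOn_Ici hanalytic
    (convexOn_add_sq_of_neg_le_iteratedDeriv_two hf.contDiff hf2) hxy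
    (by rw [hderiv]; linarith)
  have hquadratic : f = fun t ↦ f x + deriv f x * (t - x) - M / 2 * (t - x) ^ 2 := by
    ext t
    have := htangent t
    rw [hderiv] at this
    linarith
  rw [hquadratic] at hbdd
  exact not_bddBelow_concave_quadratic hM _ _ hbdd

end StrictTaylor

section Compactness

theorem exists_gt_forall_mul_lt_of_isCompact {X : Type*} [TopologicalSpace X] {K : Set X}
    (hK : IsCompact K) {f g : X → ℝ} (hf : Continuous f) (hg : Continuous g) {r : ℝ}
    (h : ∀ x ∈ K, r * g x < f x) : ∃ s > r, ∀ x ∈ K, s * g x < f x := by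
  have hnear : ∀ᶠ s in 𝓝 r, ∀ x ∈ K, s * g x < f x :=
    hK.eventually_forall_of_forall_eventually fun x hx ↦
      (by fun_prop : Continuous fun z : ℝ × X ↦ z.1 * g z.2).continuousAt.eventually_lt
        (by fun_prop : Continuous fun z : ℝ × X ↦ f z.2).continuousAt (h x hx)
  obtain ⟨s, hs, hrs⟩ := ((hnear.filter_mono nhdsWithin_le_nhds).and self_mem_nhdsWithin
    : ∀ᶠ s in 𝓝[>] r, _ ∧ s ∈ Ioi r).exists
  exact ⟨s, hrs, hs⟩

variable {E α : Type*} [AddCommGroup E] [Module ℝ E] [TopologicalSpace E] [IsTopologicalAddGroup E]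
  [ContinuousSMul ℝ E] [T2Space E] [FiniteDimensional ℝ E]

theorem isCompact_setOf_forall_abs_le_of_injective (L : E →ₗ[ℝ] α → ℝ)
    (hL : Function.Injective L) (C : ℝ) : IsCompact {v | ∀ a, |L v a| ≤ C} := by
  have hcube : IsCompact (univ.pi fun _ : α ↦ Icc (-C) C) :=
    isCompact_univ_pi fun _ ↦ isCompact_Icc
  have hpreimage := (LinearMap.isClosedEmbedding_of_injective
    (LinearMap.ker_eq_bot.2 hL)).isCompact_preimage hcube
  simpa only [preimage, mem_univ_pi, mem_Icc, ← abs_le] using hpreimage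

theorem exists_forall_abs_le_of_isCompact {K : Set E} (hK : IsCompact K) (L : E →ₗ[ℝ] α → ℝ)
    {s : Set α} (hL : ∀ v, BddAbove ((fun a ↦ |L v a|) '' s)) :
    ∃ C, ∀ v ∈ K, ∀ a ∈ s, |L v a| ≤ C := by
  let b := Module.finBasis ℝ E
  choose B hB using hL
  have hcoord (i) : ∃ R, ∀ v ∈ K, ‖b.coord i v‖ ≤ R :=
    hK.exists_bound_of_continuousOn
      (LinearMap.continuous_of_finiteDimensional (b.coord i)).continuousOn
  choose R hR using hcoord
  refine ⟨∑ i, R i * B (b i), fun v hv a ha ↦ ?_⟩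
  have hexpand : L v a = ∑ i, b.coord i v * L (b i) a := by
    conv_lhs => rw [← b.sum_repr v]
    simp only [map_sum, map_smul, Finset.sum_apply, Pi.smul_apply, smul_eq_mul, b.coord_apply]
  rw [hexpand]
  refine (Finset.abs_sum_le_sum_abs _ _).trans (Finset.sum_le_sum fun i _ ↦ ?_)
  rw [abs_mul]
  exact mul_le_mul (hR i v hv) (hB (b i) (mem_image_of_mem _ ha)) (abs_nonneg _)
    ((norm_nonneg _).trans (hR i v hv))

end Compactness

/-- The exponential polynomials on `ℝ` all of whose exponents are negative, i.e. the union of the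
spaces `P_h` over all positive `h`. -/
def decayingExpPoly : Submodule ℝ (ℝ → ℝ) :=
  Submodule.span ℝ {f | ∃ (q : ℝ[X]) (a : ℝ), 0 < a ∧ f = fun t ↦ q.eval t * Real.exp (-a * t)}

namespace decayingExpPoly

theorem eval_mul_exp_mem (q : ℝ[X]) {a : ℝ} (ha : 0 < a) :
    (fun t ↦ q.eval t * Real.exp (-a * t)) ∈ decayingExpPoly :=
  Submodule.subset_span ⟨q, a, ha, rfl⟩

variable {p : ℝ → ℝ}

theorem analyticOnNhd (hp : p ∈ decayingExpPoly) : AnalyticOnNhd ℝ p univ := by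
  induction hp using Submodule.span_induction with
  | mem f hf =>
    obtain ⟨q, a, -, rfl⟩ := hf
    exact (AnalyticOnNhd.eval_polynomial q).mul fun t _ ↦ by fun_prop
  | zero => exact analyticOnNhd_const
  | add f g _ _ hf hg => exact hf.add hg
  | smul c f _ hf => exact hf.const_smul

theorem differentiable (hp : p ∈ decayingExpPoly) : Differentiable ℝ p :=
  fun t ↦ (analyticOnNhd hp t trivial).differentiableAt

theorem tendsto_atTop_zero (hp : p ∈ decayingExpPoly) : Tendsto p atTop (𝓝 0) := by
  induction hp using Submodule.span_induction with
  | mem f hf =>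
    obtain ⟨q, a, ha, rfl⟩ := hf
    have hcomp := (q.comp (C a⁻¹ * X)).tendsto_div_exp_atTop.comp
      (tendsto_id.const_mul_atTop ha)
    refine hcomp.congr fun t ↦ ?_
    simp [ha.ne', Real.exp_neg, div_eq_mul_inv]
  | zero => exact tendsto_const_nhds
  | add f g _ _ hf hg => simpa only [add_zero] using! hf.add hg
  | smul c f _ hf => simpa only [smul_zero] using! hf.const_smul c

theorem bddAbove_abs (hp : p ∈ decayingExpPoly) : BddAbove ((fun t ↦ |p t|) '' Ici 0) := by
  obtain ⟨N, hN⟩ := eventually_atTop.1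
    ((tendsto_atTop_zero hp).abs.eventually_le_const (by simp : |(0 : ℝ)| < 1))
  have hcompact : BddAbove ((fun t ↦ |p t|) '' Icc 0 N) :=
    isCompact_Icc.bddAbove_image (differentiable hp).continuous.abs.continuousOn
  have htail : BddAbove ((fun t ↦ |p t|) '' Ici N) := ⟨1, forall_mem_image.2 hN⟩
  refine (hcompact.union htail).mono ?_
  rw [← image_union]
  exact image_mono Ici_subset_Icc_union_Ici

theorem deriv_mem (hp : p ∈ decayingExpPoly) : deriv p ∈ decayingExpPoly := by
  induction hp using Submodule.span_induction with
  | mem f hf =>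
    obtain ⟨q, a, ha, rfl⟩ := hf
    convert eval_mul_exp_mem (derivative q - C a * q) ha using 1
    ext t
    have hexp : HasDerivAt (fun t ↦ Real.exp (-a * t)) (Real.exp (-a * t) * (-a)) t :=
      (hasDerivAt_const_mul (-a)).exp
    rw [((q.hasDerivAt t).fun_mul hexp).deriv]
    simp only [eval_sub, eval_mul, eval_C]
    ring
  | zero => simp
  | add f g hf hg hf' hg' =>
    have : deriv (f + g) = deriv f + deriv g :=
      funext fun t ↦ deriv_add (differentiable hf t) (differentiable hg t)
    exact this ▸ add_mem hf' hg'
  | smul c f hf hf' =>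
    have : deriv (c • f) = c • deriv f :=
      funext fun t ↦ deriv_const_smul c (differentiable hf t)
    exact this ▸ Submodule.smul_mem _ c hf'

theorem iteratedDeriv_mem (hp : p ∈ decayingExpPoly) (n : ℕ) :
    iteratedDeriv n p ∈ decayingExpPoly := by
  induction n with
  | zero => rwa [iteratedDeriv_zero]
  | succ n ih =>
    rw [iteratedDeriv_succ]
    exact deriv_mem ih

/-- Differentiation as an endomorphism of the space of decaying exponential polynomials. -/
noncomputable def derivLinear : decayingExpPoly →ₗ[ℝ] decayingExpPoly where
  toFun p := ⟨deriv p, deriv_mem p.2⟩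
  map_add' p q := Subtype.ext <| funext fun t ↦ deriv_add (differentiable p.2 t)
    (differentiable q.2 t)
  map_smul' c p := Subtype.ext <| funext fun t ↦ deriv_const_smul c (differentiable p.2 t)

theorem coe_derivLinear_derivLinear (p : decayingExpPoly) :
    (derivLinear (derivLinear p) : ℝ → ℝ) = iteratedDeriv 2 p := by
  rw [iteratedDeriv_succ, iteratedDeriv_one]
  rfl

end decayingExpPoly

section SupAbs

variable {p : ℝ → ℝ} {t C : ℝ}

theorem abs_le_supAbs (hp : BddAbove ((fun t ↦ |p t|) '' Ici 0)) (ht : 0 ≤ t) :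
    |p t| ≤ supAbs p :=
  le_csSup hp (mem_image_of_mem _ ht)

theorem supAbs_le_iff (hp : BddAbove ((fun t ↦ |p t|) '' Ici 0)) :
    supAbs p ≤ C ↔ ∀ t ∈ Ici 0, |p t| ≤ C :=
  (csSup_le_iff hp (nonempty_Ici.image _)).trans forall_mem_image

end SupAbs

theorem two_mul_div_mul_deriv_sub_lt {p : ℝ → ℝ} (hp : AnalyticOnNhd ℝ p univ)
    (hbdd : BddBelow (p '' Ici 0)) (hle : ∀ t ∈ Ici 0, p t ≤ 1) {M : ℝ} (hM : 0 < M)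
    (hp2 : ∀ t ∈ Ioi 0, -M ≤ iteratedDeriv 2 p t) {ε : ℝ} (hε : 0 < ε) :
    2 * ε / (M + 2 * ε ^ 2) * (deriv p 0 - ε * p 0) < 1 - p 0 := by
  have htaylor : p 0 + deriv p 0 * (2 * ε / M) - M / 2 * (2 * ε / M) ^ 2 < 1 := by
    have hpos : 0 < 2 * ε / M := by positivity
    simpa using (quadratic_lt_of_neg_le_iteratedDeriv_two hp hbdd hM hp2 hpos).trans_le
      (hle _ hpos.le)
  have hcleared : 2 * ε * deriv p 0 < (1 - p 0) * M + 2 * ε ^ 2 := by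
    field_simp at htaylor
    linarith
  rw [div_mul_eq_mul_div, div_lt_iff₀ (by positivity)]
  linarith

section FiniteDimensional

variable {V : Submodule ℝ (ℝ → ℝ)} [FiniteDimensional ℝ V]

theorem isCompact_setOf_supAbs_le (hV : V ≤ decayingExpPoly) (C : ℝ) :
    IsCompact {p : V | supAbs p ≤ C} := by
  let restrict : V →ₗ[ℝ] Ici (0 : ℝ) → ℝ := LinearMap.funLeft ℝ ℝ Subtype.val ∘ₗ V.subtype
  have hinj : Function.Injective restrict := fun p q hpq ↦ by
    refine Subtype.ext <| (decayingExpPoly.analyticOnNhd (hV p.2)).eq_of_eventuallyEq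
      (decayingExpPoly.analyticOnNhd (hV q.2)) (z₀ := 1) ?_
    filter_upwards [Ici_mem_nhds one_pos] with t ht
    exact congrFun hpq ⟨t, ht⟩
  convert isCompact_setOf_forall_abs_le_of_injective restrict hinj C using 3 with p
  rw [supAbs_le_iff (decayingExpPoly.bddAbove_abs (hV p.2))]
  exact (SetCoe.forall (p := fun t ↦ |restrict p t| ≤ C)).symm

theorem exists_forall_supAbs_iteratedDeriv_two_le (hV : V ≤ decayingExpPoly) :
    ∃ B, ∀ p ∈ V, supAbs p ≤ 1 → supAbs (iteratedDeriv 2 p) ≤ B := by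
  let deriv2 : V →ₗ[ℝ] ℝ → ℝ := decayingExpPoly.subtype ∘ₗ decayingExpPoly.derivLinear ∘ₗ
    decayingExpPoly.derivLinear ∘ₗ Submodule.inclusion hV
  have hderiv2 (p : V) : deriv2 p = iteratedDeriv 2 p :=
    decayingExpPoly.coe_derivLinear_derivLinear (Submodule.inclusion hV p)
  have hbdd (p : V) : BddAbove ((fun t ↦ |deriv2 p t|) '' Ici 0) :=
    decayingExpPoly.bddAbove_abs (SetLike.coe_mem _)
  obtain ⟨B, hB⟩ := exists_forall_abs_le_of_isCompact (isCompact_setOf_supAbs_le hV 1) deriv2 hbdd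
  refine ⟨B, fun p hp hp1 ↦ ?_⟩
  rw [← hderiv2 ⟨p, hp⟩, supAbs_le_iff (hbdd _)]
  exact hB _ hp1

theorem continuous_deriv_apply (hV : V ≤ decayingExpPoly) (t : ℝ) :
    Continuous fun p : V ↦ deriv p.1 t :=
  LinearMap.continuous_of_finiteDimensional (LinearMap.proj t ∘ₗ decayingExpPoly.subtype ∘ₗ
    decayingExpPoly.derivLinear ∘ₗ Submodule.inclusion hV)

theorem exists_gt_forall_mul_deriv_sub_lt (hV : V ≤ decayingExpPoly) {M : ℝ} (hM : 0 < M)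
    (hV2 : ∀ p ∈ V, supAbs p ≤ 1 → ∀ t ∈ Ici 0, |iteratedDeriv 2 p t| ≤ M)
    {ε : ℝ} (hε : 0 < ε) :
    ∃ s > 2 * ε / (M + 2 * ε ^ 2), ∀ p ∈ V, supAbs p ≤ 1 →
      s * (deriv p 0 - ε * p 0) < 1 - p 0 := by
  have hstrict (p : V) (hp1 : supAbs p ≤ 1) :
      2 * ε / (M + 2 * ε ^ 2) * (deriv p.1 0 - ε * p.1 0) < 1 - p.1 0 := by
    have habs := (supAbs_le_iff (decayingExpPoly.bddAbove_abs (hV p.2))).1 hp1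
    exact two_mul_div_mul_deriv_sub_lt (decayingExpPoly.analyticOnNhd (hV p.2))
      ⟨-1, forall_mem_image.2 fun t ht ↦ neg_le_of_abs_le (habs t ht)⟩
      (fun t ht ↦ le_of_abs_le (habs t ht)) hM
      (fun t ht ↦ neg_le_of_abs_le (hV2 p p.2 hp1 t (Ioi_subset_Ici_self ht))) hε
  have heval : Continuous fun p : V ↦ p.1 0 :=
    (continuous_apply 0).comp continuous_subtype_val
  obtain ⟨s, hs, hsV⟩ := exists_gt_forall_mul_lt_of_isCompact (isCompact_setOf_supAbs_le hV 1)
    (continuous_const.sub heval)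
    ((continuous_deriv_apply hV 0).sub (continuous_const.mul heval)) hstrict
  exact ⟨s, hs, fun p hp ↦ hsV ⟨p, hp⟩⟩

end FiniteDimensional

section ExpPoly

variable {d : ℕ} {h : Fin d → ℝ}

/-- The space `P_h` as a submodule of `ℝ → ℝ`; its underlying set is `expPoly d h`. -/
def expPolySubmodule (d : ℕ) (h : Fin d → ℝ) : Submodule ℝ (ℝ → ℝ) :=
  Submodule.span ℝ (range fun i t ↦
    t ^ Nat.card {j : Fin d // j < i ∧ h j = h i} * Real.exp (-(h i) * t))

instance : FiniteDimensional ℝ (expPolySubmodule d h) :=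
  FiniteDimensional.span_of_finite ℝ (finite_range _)

theorem mem_expPolySubmodule {p : ℝ → ℝ} : p ∈ expPolySubmodule d h ↔ p ∈ expPoly d h := by
  rw [expPolySubmodule, Submodule.mem_span_range_iff_exists_fun]
  simp [expPoly, funext_iff, eq_comm, mul_assoc]

theorem expPolySubmodule_le_decayingExpPoly (hpos : ∀ i, 0 < h i) :
    expPolySubmodule d h ≤ decayingExpPoly :=
  Submodule.span_le.2 <| range_subset_iff.2 fun i ↦ by
    simpa only [eval_pow, eval_X, SetLike.mem_coe] using
      decayingExpPoly.eval_mul_exp_mem (X ^ Nat.card {j : Fin d // j < i ∧ h j = h i}) (hpos i)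

theorem supAbs_iteratedDeriv_two_le_M2 (hpos : ∀ i, 0 < h i) {p : ℝ → ℝ} (hp : p ∈ expPoly d h)
    (hp1 : supAbs p ≤ 1) : supAbs (iteratedDeriv 2 p) ≤ M2 d h := by
  obtain ⟨B, hB⟩ := exists_forall_supAbs_iteratedDeriv_two_le
    (expPolySubmodule_le_decayingExpPoly hpos)
  refine le_csSup ⟨B, ?_⟩ ⟨p, hp, hp1, rfl⟩
  rintro _ ⟨q, hq, hq1, rfl⟩
  exact hB q (mem_expPolySubmodule.2 hq) hq1

theorem abs_iteratedDeriv_two_le_M2 (hpos : ∀ i, 0 < h i) {p : ℝ → ℝ} (hp : p ∈ expPoly d h)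
    (hp1 : supAbs p ≤ 1) {t : ℝ} (ht : 0 ≤ t) : |iteratedDeriv 2 p t| ≤ M2 d h := by
  have hdecay := expPolySubmodule_le_decayingExpPoly hpos (mem_expPolySubmodule.2 hp)
  have hbdd := decayingExpPoly.bddAbove_abs (decayingExpPoly.iteratedDeriv_mem hdecay 2)
  exact (abs_le_supAbs hbdd ht).trans (supAbs_iteratedDeriv_two_le_M2 hpos hp hp1)

theorem neg_exp_mem_expPoly (h : Fin d → ℝ) (i : Fin d) :
    (fun t ↦ -Real.exp (-(h i) * t)) ∈ expPoly d h := by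
  -- Among the indices with exponent `h i`, the least one carries the power `t ^ 0`.
  obtain ⟨j, hj : h j = h i, hmin⟩ :=
    wellFounded_lt.has_min {j | h j = h i} ⟨i, rfl⟩
  have : IsEmpty {k : Fin d // k < j ∧ h k = h j} :=
    ⟨fun k ↦ hmin k (k.2.2.trans hj) k.2.1⟩
  have hmem : (fun t ↦ Real.exp (-(h j) * t)) ∈ expPolySubmodule d h :=
    Submodule.subset_span ⟨j, by simp only [Nat.card_of_isEmpty, pow_zero, one_mul]⟩
  rw [← hj]
  exact mem_expPolySubmodule.1 (neg_mem hmem)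

theorem supAbs_neg_exp_le_one {a : ℝ} (ha : 0 ≤ a) :
    supAbs (fun t ↦ -Real.exp (-a * t)) ≤ 1 := by
  refine csSup_le (nonempty_Ici.image _) (forall_mem_image.2 fun t ht ↦ ?_)
  rw [abs_neg, Real.abs_exp, Real.exp_le_one_iff]
  exact mul_nonpos_of_nonpos_of_nonneg (neg_nonpos.2 ha) ht

theorem deriv_neg_exp_neg_mul_zero (a : ℝ) : deriv (fun t ↦ -Real.exp (-a * t)) 0 = a := by
  have hderiv : HasDerivAt (fun t ↦ -Real.exp (-a * t)) (-(Real.exp (-a * 0) * -a)) 0 :=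
    (hasDerivAt_const_mul (-a)).exp.fun_neg
  simpa using hderiv.deriv

theorem M2_pos (hd : 1 ≤ d) (hpos : ∀ i, 0 < h i) : 0 < M2 d h := by
  let i : Fin d := ⟨0, hd⟩
  have hbound := abs_iteratedDeriv_two_le_M2 hpos
    (neg_exp_mem_expPoly h i) (supAbs_neg_exp_le_one (hpos i).le) le_rfl
  rw [iteratedDeriv_fun_neg, iteratedDeriv_exp_const_mul] at hbound
  refine lt_of_lt_of_le ?_ hbound
  simpa using pow_pos (hpos i) 2

theorem kappa_lower_bound_general (hd : 1 ≤ d) (hpos : ∀ i, 0 < h i) {ε : ℝ} (hε : 0 < ε) :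
    2 * ε / (M2 d h + 2 * ε ^ 2) < kappa d h ε := by
  obtain ⟨s, hs, hsV⟩ := exists_gt_forall_mul_deriv_sub_lt
    (expPolySubmodule_le_decayingExpPoly hpos) (M2_pos hd hpos)
    (fun p hp hp1 t ht ↦ abs_iteratedDeriv_two_le_M2 hpos (mem_expPolySubmodule.1 hp) hp1 ht) hε
  refine hs.trans_le (le_csInf ?_ ?_)
  · let i : Fin d := ⟨0, hd⟩
    refine ⟨_, _, neg_exp_mem_expPoly h i, supAbs_neg_exp_le_one (hpos i).le, ?_, rfl⟩
    rw [deriv_neg_exp_neg_mul_zero]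
    simp only [mul_zero, Real.exp_zero]
    linarith [hpos i]
  · rintro _ ⟨p, hp, hp1, hp2, rfl⟩
    exact (le_div_iff₀ (sub_pos.2 hp2)).2 (hsV p (mem_expPolySubmodule.2 hp) hp1).le

end ExpPoly

/-- For `0 < h₁ ≤ ⋯ ≤ h_d ≤ 1` and `ε > 0`, `κ(h, ε) > 2ε / (M₂(h) + 2ε²)`. -/
theorem kappa_lower_bound (d : ℕ) (hd : 1 ≤ d) (h : Fin d → ℝ)
    (hmono : Monotone h) (hpos : ∀ i, 0 < h i) (hone : ∀ i, h i ≤ 1)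
    (ε : ℝ) (hε : 0 < ε) :
    2 * ε / (M2 d h + 2 * ε ^ 2) < kappa d h ε :=
  kappa_lower_bound_general hd hpos hε
end

section
/- Let d ≥ 2, let h = (h₁,…,h_d) satisfy 0 < h₁ ≤ ⋯ ≤ h_d ≤ 1, and let ε > 0. Suppose T ∈ P_h satisfies sup_{t ≥ 0} |T(t)| = 1 and there exist points 0 = ν₁ < ν₂ < ⋯ < ν_d such that T(νₖ) = (−1)ᵏ for k = 1,…,d (that is, T is the h-Chebyshev polynomial with alternance points νₖ). Then κ(h, ε) = inf { (1 − T(t)) / (T'(t) − ε·T(t)) : t ∈ [0, ν₂] and T'(t) > ε·T(t) }. -/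
/-!
The space `P_h` is translation invariant and, by Rolle's theorem applied to `exp (a t) f(t)`, a
nonzero element has fewer than `d` zeros. Hence translates `T(· + t)` with `t ∈ [0, ν₂]` compete in
the infimum defining `κ(h, ε)`. Conversely, let `|p| < 1` and choose `t ∈ [0, ν₂)` with
`T(t) = p(0)`. If `p'(0) > T'(t)`, then `p - T(· + t)` vanishes at `0`, is positive just after `0`,
and has alternating signs at `ν₂ - t, …, ν_d - t`; this gives `d` zeros, which is impossible. So
`p'(0) ≤ T'(t)`, and the quotient of `p` at `0` is at least that of `T` at `t`. The case `|p| ≤ 1`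
follows by applying this to `c p` and letting `c` tend to `1` from below. (In the code the `νₖ` are
indexed from `0`, so `ν₂` is `ν 1`.)
-/

/-! ### Zeros of functions and of their derivatives -/

theorem exists_strictMono_forall_mem_Ioo {n : ℕ} {x : Fin (n + 1) → ℝ} (hx : StrictMono x)
    {P : ℝ → Prop} (hP : ∀ i : Fin n, ∃ y ∈ Set.Ioo (x i.castSucc) (x i.succ), P y) :
    ∃ y : Fin n → ℝ, StrictMono y ∧ ∀ i, x i.castSucc < y i ∧ P (y i) := by
  choose y hy hPy using hP
  refine ⟨y, fun i j hij => ?_, fun i => ⟨(hy i).1, hPy i⟩⟩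
  calc y i < x i.succ := (hy i).2
    _ ≤ x j.castSucc := hx.monotone (Fin.succ_le_castSucc_iff.mpr hij)
    _ < y j := (hy j).1

theorem exists_zero_mem_Ioo_of_mul_neg {f : ℝ → ℝ} (hf : Continuous f) {a b : ℝ} (hab : a < b)
    (hneg : f a * f b < 0) : ∃ z ∈ Set.Ioo a b, f z = 0 := by
  rcases mul_neg_iff.mp hneg with ⟨ha, hb⟩ | ⟨ha, hb⟩
  · exact intermediate_value_Ioo' hab.le hf.continuousOn ⟨hb, ha⟩
  · exact intermediate_value_Ioo hab.le hf.continuousOn ⟨ha, hb⟩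

theorem exists_strictMono_zeros_of_alternating {f : ℝ → ℝ} (hf : Continuous f) {n : ℕ}
    {x : Fin (n + 1) → ℝ} (hx : StrictMono x)
    (hsign : ∀ k : Fin (n + 1), 0 < (-1) ^ (k : ℕ) * f (x k)) :
    ∃ z : Fin n → ℝ, StrictMono z ∧ ∀ i, x i.castSucc < z i ∧ f (z i) = 0 := by
  refine exists_strictMono_forall_mem_Ioo hx fun i =>
    exists_zero_mem_Ioo_of_mul_neg hf (hx i.castSucc_lt_succ) ?_
  have hleft := hsign i.castSucc
  have hright := hsign i.succ
  rw [Fin.val_castSucc] at hleft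
  rw [Fin.val_succ, pow_succ] at hright
  rcases neg_one_pow_eq_or ℝ (i : ℕ) with hpow | hpow <;> rw [hpow] at hleft hright <;> nlinarith

theorem hasDerivAt_exp_mul_mul {f : ℝ → ℝ} {t : ℝ} (hf : DifferentiableAt ℝ f t) (a : ℝ) :
    HasDerivAt (fun s => Real.exp (a * s) * f s) (Real.exp (a * t) * (deriv f t + a * f t)) t := by
  have hexp : HasDerivAt (fun s => Real.exp (a * s)) (Real.exp (a * t) * a) t := by
    simpa using ((hasDerivAt_id t).const_mul a).exp
  exact (hexp.mul hf.hasDerivAt).congr_deriv (by ring)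

theorem exists_strictMono_zeros_deriv_add_mul {f : ℝ → ℝ} (hf : Differentiable ℝ f) (a : ℝ) {n : ℕ}
    {z : Fin (n + 1) → ℝ} (hz : StrictMono z) (hfz : ∀ i, f (z i) = 0) :
    ∃ w : Fin n → ℝ, StrictMono w ∧ ∀ i, deriv f (w i) + a * f (w i) = 0 := by
  suffices hrolle : ∀ i : Fin n, ∃ w ∈ Set.Ioo (z i.castSucc) (z i.succ),
      deriv f w + a * f w = 0 by
    obtain ⟨w, hw, hw0⟩ := exists_strictMono_forall_mem_Ioo hz hrolle
    exact ⟨w, hw, fun i => (hw0 i).2⟩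
  intro i
  obtain ⟨w, hw, hw0⟩ := exists_hasDerivAt_eq_zero (hz i.castSucc_lt_succ)
    (fun t _ => (hasDerivAt_exp_mul_mul (hf t) a).continuousAt.continuousWithinAt)
    (by simp [hfz]) (fun t _ => hasDerivAt_exp_mul_mul (hf t) a)
  exact ⟨w, hw, (mul_eq_zero.mp hw0).resolve_left (Real.exp_ne_zero _)⟩

theorem eq_zero_of_deriv_add_mul_eq_zero {f : ℝ → ℝ} (hf : Differentiable ℝ f) {a : ℝ}
    (hode : ∀ t, deriv f t + a * f t = 0) {z : ℝ} (hz : f z = 0) : f = 0 := by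
  funext t
  have hconst := is_const_of_deriv_eq_zero
    (fun t => (hasDerivAt_exp_mul_mul (hf t) a).differentiableAt)
    (fun t => by rw [(hasDerivAt_exp_mul_mul (hf t) a).deriv, hode t, mul_zero]) t z
  rw [hz, mul_zero] at hconst
  exact (mul_eq_zero.mp hconst).resolve_left (Real.exp_ne_zero _)

theorem exists_mul_lt_deriv {f : ℝ → ℝ} (hf : Differentiable ℝ f) (ε : ℝ) {a b : ℝ} (hab : a < b)
    (ha : f a < 0) (hb : 0 < f b) : ∃ t ∈ Set.Ioo a b, ε * f t < deriv f t := by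
  have hderiv := fun t => hasDerivAt_exp_mul_mul (hf t) (-ε)
  obtain ⟨t, ht, hslope⟩ := exists_hasDerivAt_eq_slope _ _ hab
    (fun t _ => (hderiv t).continuousAt.continuousWithinAt) (fun t _ => hderiv t)
  have hpos : 0 < Real.exp (-ε * t) * (deriv f t + -ε * f t) := by
    rw [hslope]
    refine div_pos ?_ (sub_pos.mpr hab)
    linarith [mul_pos (Real.exp_pos (-ε * b)) hb,
      mul_neg_of_pos_of_neg (Real.exp_pos (-ε * a)) ha]
  exact ⟨t, ht, by linarith [(mul_pos_iff_of_pos_left (Real.exp_pos _)).mp hpos]⟩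

theorem exists_pos_mem_Ioo_of_deriv_pos {f : ℝ → ℝ} {a b : ℝ} (hab : a < b) (ha : f a = 0)
    (hderiv : 0 < deriv f a) : ∃ t ∈ Set.Ioo a b, 0 < f t := by
  have hsign := (eventually_nhdsWithin_sign_eq_of_deriv_pos hderiv ha).filter_mono
    (nhdsWithin_le_nhds (s := Set.Ioi a))
  obtain ⟨t, ht, htI⟩ := (hsign.and (Ioo_mem_nhdsGT hab)).exists
  rw [sign_pos (sub_pos.mpr htI.1), sign_eq_one_iff] at ht
  exact ⟨t, htI, ht⟩

/-! ### Translation-invariant Chebyshev spaces -/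

/-- A translation-invariant Chebyshev (Haar) space of order `n` on the line: a space of
differentiable functions, stable under translations, whose nonzero elements have fewer than `n`
zeros. It carries all the structure of `P_h` that the comparison with `T` uses. The `n` zeros are
listed in increasing order. -/
structure IsChebyshevSpace (n : ℕ) (V : Submodule ℝ (ℝ → ℝ)) : Prop where
  differentiable : ∀ f ∈ V, Differentiable ℝ f
  comp_add_const_mem : ∀ f ∈ V, ∀ c : ℝ, (fun t => f (t + c)) ∈ V
  eq_zero_of_zeros : ∀ f ∈ V, ∀ z : Fin n → ℝ, StrictMono z → (∀ i, f (z i) = 0) → f = 0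

/-- The values at points `t ∈ I` with `ε f(t) < f'(t)` of the quotient
`(1 - f(t)) / (f'(t) - ε f(t))` whose infimum is `κ`. -/
def ratiosOn (ε : ℝ) (f : ℝ → ℝ) (I : Set ℝ) : Set ℝ :=
  {y | ∃ t ∈ I, ε * f t < deriv f t ∧ y = (1 - f t) / (deriv f t - ε * f t)}

/-- The values at `0` of the same quotient for the functions in `V` bounded by `1` on `[0, ∞)`,
so that `κ(h, ε)` is the infimum of this set for `V = P_h`. -/
def ratiosAtZero (ε : ℝ) (V : Submodule ℝ (ℝ → ℝ)) : Set ℝ :=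
  {y | ∃ p ∈ V, (∀ t, 0 ≤ t → |p t| ≤ 1) ∧ ε * p 0 < deriv p 0 ∧
    y = (1 - p 0) / (deriv p 0 - ε * p 0)}

theorem bddBelow_ratiosAtZero (ε : ℝ) (V : Submodule ℝ (ℝ → ℝ)) :
    BddBelow (ratiosAtZero ε V) := by
  refine ⟨0, ?_⟩
  rintro _ ⟨p, -, hp, hlt, rfl⟩
  exact div_nonneg (sub_nonneg.mpr (abs_le.mp (hp 0 le_rfl)).2) (sub_nonneg.mpr hlt.le)

namespace IsChebyshevSpace

theorem eq_zero_of_zero_of_alternating {n : ℕ} {V : Submodule ℝ (ℝ → ℝ)}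
    (hV : IsChebyshevSpace (n + 1) V) {f : ℝ → ℝ} (hf : f ∈ V) {a : ℝ} (ha : f a = 0)
    {x : Fin (n + 1) → ℝ} (hx : StrictMono x) (hax : a < x 0)
    (hsign : ∀ k : Fin (n + 1), 0 < (-1) ^ (k : ℕ) * f (x k)) : f = 0 := by
  obtain ⟨z, hz, hfz⟩ :=
    exists_strictMono_zeros_of_alternating (hV.differentiable f hf).continuous hx hsign
  have haz : ∀ i, a < z i := fun i =>
    (hax.trans_le (hx.monotone (Fin.zero_le _))).trans (hfz i).1
  exact hV.eq_zero_of_zeros f hf (Fin.cons a z) (Fin.strictMono_cons.mpr ⟨haz, hz⟩)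
    (Fin.cases ha fun i => (hfz i).2)

theorem ratiosOn_subset_ratiosAtZero {n : ℕ} {V : Submodule ℝ (ℝ → ℝ)}
    (hV : IsChebyshevSpace n V) {T : ℝ → ℝ} (hT : T ∈ V) (hT1 : ∀ t, 0 ≤ t → |T t| ≤ 1)
    (ε : ℝ) {I : Set ℝ} (hI : I ⊆ Set.Ici 0) : ratiosOn ε T I ⊆ ratiosAtZero ε V := by
  rintro _ ⟨t, ht, hlt, rfl⟩
  have hderiv : deriv (fun s => T (s + t)) 0 = deriv T t := by
    rw [deriv_comp_add_const, zero_add]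
  refine ⟨fun s => T (s + t), hV.comp_add_const_mem T hT t,
    fun s hs => hT1 _ (add_nonneg hs (hI ht)), ?_, ?_⟩
  · simpa only [hderiv, zero_add] using hlt
  · simp only [hderiv, zero_add]

section Alternance

variable {n : ℕ} {V : Submodule ℝ (ℝ → ℝ)} {T p : ℝ → ℝ} {ν : Fin (n + 2) → ℝ}

theorem deriv_le_deriv_of_alternance (hV : IsChebyshevSpace (n + 2) V) (hT : T ∈ V)
    (hν : StrictMono ν) (hTν : ∀ k, T (ν k) = (-1) ^ ((k : ℕ) + 1)) (hp : p ∈ V)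
    (hp1 : ∀ t, 0 ≤ t → |p t| < 1) {t : ℝ} (ht : t < ν 1) (hpT : p 0 = T t) :
    deriv p 0 ≤ deriv T t := by
  by_contra! hlt
  set q : ℝ → ℝ := p - fun s => T (s + t) with hq
  have hqV : q ∈ V := V.sub_mem hp (hV.comp_add_const_mem T hT t)
  have hq0 : q 0 = 0 := by simp [hq, hpT]
  have hq' : 0 < deriv q 0 := by
    rw [hq, deriv_sub (hV.differentiable p hp 0)
      (hV.differentiable _ (hV.comp_add_const_mem T hT t) 0), deriv_comp_add_const, zero_add]
    exact sub_pos.mpr hlt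
  obtain ⟨s, ⟨hs0, hsν⟩, hqs⟩ := exists_pos_mem_Ioo_of_deriv_pos (sub_pos.mpr ht) hq0 hq'
  have hsx : ∀ j : Fin (n + 1), s < ν j.succ - t := fun j =>
    hsν.trans_le (sub_le_sub_right (hν.monotone (Fin.succ_le_succ_iff.mpr (Fin.zero_le j))) t)
  have hx : StrictMono (Fin.cons s fun j : Fin (n + 1) => ν j.succ - t : Fin (n + 2) → ℝ) :=
    Fin.strictMono_cons.mpr
      ⟨hsx, fun i j hij => sub_lt_sub_right (hν (Fin.succ_lt_succ_iff.mpr hij)) t⟩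
  have hqx : ∀ j : Fin (n + 1), 0 < (-1) ^ ((j : ℕ) + 1) * q (ν j.succ - t) := fun j => by
    have hpx := abs_lt.mp (hp1 (ν j.succ - t) (hs0.trans (hsx j)).le)
    have hTx := hTν j.succ
    rw [Fin.val_succ, pow_succ] at hTx
    simp only [hq, Pi.sub_apply, sub_add_cancel, hTx]
    rcases neg_one_pow_eq_or ℝ ((j : ℕ) + 1) with hpow | hpow <;> rw [hpow] <;> linarith
  have hqzero : q = 0 := by
    refine hV.eq_zero_of_zero_of_alternating hqV hq0 hx hs0 fun k => ?_
    cases k using Fin.cases with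
    | zero => simpa using hqs
    | succ j => simpa using hqx j
  simp [hqzero] at hqs

theorem exists_eq_and_deriv_le_of_alternance (hV : IsChebyshevSpace (n + 2) V) (hT : T ∈ V)
    (hν : StrictMono ν) (hTν : ∀ k, T (ν k) = (-1) ^ ((k : ℕ) + 1)) (hp : p ∈ V)
    (hp1 : ∀ t, 0 ≤ t → |p t| < 1) :
    ∃ t ∈ Set.Ioo (ν 0) (ν 1), T t = p 0 ∧ deriv p 0 ≤ deriv T t := by
  have hp0 : p 0 ∈ Set.Ioo (T (ν 0)) (T (ν 1)) := by
    simpa [hTν] using abs_lt.mp (hp1 0 le_rfl)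
  obtain ⟨t, ht, hTt⟩ := intermediate_value_Ioo (hν Fin.zero_lt_one).le
    (hV.differentiable T hT).continuous.continuousOn hp0
  exact ⟨t, ht, hTt, hV.deriv_le_deriv_of_alternance hT hν hTν hp hp1 ht.2 hTt.symm⟩

theorem mul_deriv_sub_le_of_abs_lt_one (hV : IsChebyshevSpace (n + 2) V) (hT : T ∈ V)
    (hν : StrictMono ν) (hTν : ∀ k, T (ν k) = (-1) ^ ((k : ℕ) + 1)) (hp : p ∈ V)
    (hp1 : ∀ t, 0 ≤ t → |p t| < 1) {ε m : ℝ} (hpε : ε * p 0 < deriv p 0)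
    (hm : m ∈ lowerBounds (ratiosOn ε T (Set.Icc (ν 0) (ν 1)))) :
    m * (deriv p 0 - ε * p 0) ≤ 1 - p 0 := by
  obtain ⟨t, ht, hTt, hderiv⟩ := hV.exists_eq_and_deriv_le_of_alternance hT hν hTν hp hp1
  have hp0 : p 0 ≤ 1 := (abs_lt.mp (hp1 0 le_rfl)).2.le
  rw [← le_div_iff₀ (sub_pos.mpr hpε)]
  calc m ≤ (1 - T t) / (deriv T t - ε * T t) :=
        hm ⟨t, Set.Ioo_subset_Icc_self ht, by rw [hTt]; exact hpε.trans_le hderiv, rfl⟩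
    _ = (1 - p 0) / (deriv T t - ε * p 0) := by rw [hTt]
    _ ≤ (1 - p 0) / (deriv p 0 - ε * p 0) :=
        div_le_div_of_nonneg_left (sub_nonneg.mpr hp0) (sub_pos.mpr hpε)
          (sub_le_sub_right hderiv _)

theorem lowerBounds_ratiosOn_subset (hV : IsChebyshevSpace (n + 2) V) (hT : T ∈ V)
    (hν : StrictMono ν) (hTν : ∀ k, T (ν k) = (-1) ^ ((k : ℕ) + 1)) (ε : ℝ) :
    lowerBounds (ratiosOn ε T (Set.Icc (ν 0) (ν 1))) ⊆ lowerBounds (ratiosAtZero ε V) := by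
  rintro m hm _ ⟨p, hp, hp1, hpε, rfl⟩
  rw [le_div_iff₀ (sub_pos.mpr hpε)]
  have hscaled : ∀ c ∈ Set.Ioo (0 : ℝ) 1,
      m * (c * deriv p 0 - ε * (c * p 0)) ≤ 1 - c * p 0 := by
    rintro c ⟨hc0, hc1⟩
    have hderiv : deriv (c • p) 0 = c * deriv p 0 :=
      deriv_const_smul c (hV.differentiable p hp 0)
    have hcp1 : ∀ t, 0 ≤ t → |(c • p) t| < 1 := fun t ht => by
      rw [Pi.smul_apply, smul_eq_mul, abs_mul, abs_of_pos hc0]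
      exact (mul_le_of_le_one_right hc0.le (hp1 t ht)).trans_lt hc1
    have hcpε : ε * (c • p) 0 < deriv (c • p) 0 := by
      rw [hderiv, Pi.smul_apply, smul_eq_mul, mul_left_comm]
      exact mul_lt_mul_of_pos_left hpε hc0
    simpa only [hderiv, Pi.smul_apply, smul_eq_mul] using
      hV.mul_deriv_sub_le_of_abs_lt_one hT hν hTν (V.smul_mem c hp) hcp1 hcpε hm
  have hclosure : (1 : ℝ) ∈ closure (Set.Ioo 0 1) := by
    rw [closure_Ioo zero_ne_one]
    exact Set.right_mem_Icc.mpr zero_le_one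
  simpa only [one_mul] using
    le_on_closure hscaled (by fun_prop) (by fun_prop) hclosure

theorem sInf_ratiosAtZero_eq (hV : IsChebyshevSpace (n + 2) V) (hT : T ∈ V)
    (hT1 : ∀ t, 0 ≤ t → |T t| ≤ 1) (hν : StrictMono ν) (hν0 : 0 ≤ ν 0)
    (hTν : ∀ k, T (ν k) = (-1) ^ ((k : ℕ) + 1)) (ε : ℝ) :
    sInf (ratiosAtZero ε V) = sInf (ratiosOn ε T (Set.Icc (ν 0) (ν 1))) := by
  have hsub := hV.ratiosOn_subset_ratiosAtZero hT hT1 ε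
    (Set.Icc_subset_Ici_self.trans (Set.Ici_subset_Ici.mpr hν0) : Set.Icc (ν 0) (ν 1) ⊆ _)
  have hbdd := bddBelow_ratiosAtZero ε V
  obtain ⟨t, ht, htε⟩ := exists_mul_lt_deriv (hV.differentiable T hT) ε (hν Fin.zero_lt_one)
    (by simp [hTν]) (by simp [hTν])
  have hne : (ratiosOn ε T (Set.Icc (ν 0) (ν 1))).Nonempty :=
    ⟨_, t, Set.Ioo_subset_Icc_self ht, htε, rfl⟩
  refine le_antisymm (csInf_le_csInf hbdd hne hsub) (le_csInf (hne.mono hsub) ?_)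
  exact hV.lowerBounds_ratiosOn_subset hT hν hTν ε fun y hy => csInf_le (hbdd.mono hsub) hy

end Alternance

end IsChebyshevSpace

/-! ### Exponential polynomials -/

/-- The exponential monomial `t ↦ t ^ m * exp (-a t)`. -/
noncomputable def expMonomial (a : ℝ) (m : ℕ) : ℝ → ℝ := fun t => t ^ m * Real.exp (-a * t)

theorem hasDerivAt_expMonomial (a : ℝ) (m : ℕ) (t : ℝ) :
    HasDerivAt (expMonomial a m) (m * expMonomial a (m - 1) t - a * expMonomial a m t) t := by
  have hexp : HasDerivAt (fun s => Real.exp (-a * s)) (Real.exp (-a * t) * -a) t := by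
    simpa using ((hasDerivAt_id t).const_mul (-a)).exp
  exact ((hasDerivAt_pow m t).mul hexp).congr_deriv (by simp only [expMonomial]; ring)

theorem differentiable_expMonomial (a : ℝ) (m : ℕ) : Differentiable ℝ (expMonomial a m) :=
  fun t => (hasDerivAt_expMonomial a m t).differentiableAt

theorem expMonomial_add (a : ℝ) (m : ℕ) (t c : ℝ) :
    expMonomial a m (t + c) = ∑ k ∈ Finset.range (m + 1),
      (Real.exp (-a * c) * c ^ (m - k) * m.choose k) * expMonomial a k t := by
  simp only [expMonomial, add_pow, mul_add, Real.exp_add, Finset.sum_mul]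
  exact Finset.sum_congr rfl fun k _ => by ring

theorem abs_expMonomial_le {a : ℝ} (ha : 0 < a) (m : ℕ) {t : ℝ} (ht : 0 ≤ t) :
    |expMonomial a m t| ≤ m.factorial / a ^ m := by
  have hexp := Real.pow_div_factorial_le_exp (a * t) (by positivity) m
  rw [div_le_iff₀ (by positivity), mul_pow] at hexp
  rw [expMonomial, abs_of_nonneg (by positivity), le_div_iff₀ (by positivity), neg_mul,
    Real.exp_neg, ← div_eq_mul_inv, div_mul_eq_mul_div, div_le_iff₀ (Real.exp_pos _)]
  linarith

/-- The space of exponential polynomials whose exponents, with multiplicities, form the multiset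
`s`. Unlike the list `h`, the multiset can have an arbitrary exponent removed, as the induction on
the number of zeros requires. -/
noncomputable def expPolySpace (s : Multiset ℝ) : Submodule ℝ (ℝ → ℝ) :=
  Submodule.span ℝ {f | ∃ a m, m < s.count a ∧ f = expMonomial a m}

namespace expPolySpace

variable {s : Multiset ℝ} {f : ℝ → ℝ}

theorem expMonomial_mem {a : ℝ} {m : ℕ} (hm : m < s.count a) :
    expMonomial a m ∈ expPolySpace s :=
  Submodule.subset_span ⟨a, m, hm, rfl⟩

theorem differentiable (hf : f ∈ expPolySpace s) : Differentiable ℝ f := by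
  induction hf using Submodule.span_induction with
  | mem _ hx =>
    obtain ⟨a, m, -, rfl⟩ := hx
    exact differentiable_expMonomial a m
  | zero => exact differentiable_const 0
  | add _ _ _ _ hf hg => exact hf.add hg
  | smul c _ _ hf => exact hf.const_smul c

theorem comp_add_const_mem (hf : f ∈ expPolySpace s) (c : ℝ) :
    (fun t => f (t + c)) ∈ expPolySpace s := by
  suffices hle : expPolySpace s ≤
      (expPolySpace s).comap (LinearMap.funLeft ℝ ℝ fun t : ℝ => t + c) from hle hf
  refine Submodule.span_le.mpr ?_
  rintro _ ⟨a, m, hm, rfl⟩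
  have hexpand : LinearMap.funLeft ℝ ℝ (fun t : ℝ => t + c) (expMonomial a m) =
      ∑ k ∈ Finset.range (m + 1),
        (Real.exp (-a * c) * c ^ (m - k) * m.choose k) • expMonomial a k := by
    funext t
    simp [LinearMap.funLeft_apply, expMonomial_add]
  rw [SetLike.mem_coe, Submodule.mem_comap, hexpand]
  refine Submodule.sum_mem _ fun k hk => Submodule.smul_mem _ _ (expMonomial_mem ?_)
  exact (Nat.lt_succ_iff.mp (Finset.mem_range.mp hk)).trans_lt hm

theorem exists_abs_le (hs : ∀ a ∈ s, 0 < a) (hf : f ∈ expPolySpace s) :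
    ∃ C, ∀ t, 0 ≤ t → |f t| ≤ C := by
  induction hf using Submodule.span_induction with
  | mem _ hx =>
    obtain ⟨a, m, hm, rfl⟩ := hx
    have ha : 0 < a := hs a (Multiset.count_pos.mp (Nat.zero_lt_of_lt hm))
    exact ⟨_, fun t ht => abs_expMonomial_le ha m ht⟩
  | zero => exact ⟨0, by simp⟩
  | add f g _ _ hf hg =>
    obtain ⟨C, hC⟩ := hf
    obtain ⟨D, hD⟩ := hg
    exact ⟨C + D, fun t ht => (abs_add_le _ _).trans (add_le_add (hC t ht) (hD t ht))⟩
  | smul c f _ hf =>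
    obtain ⟨C, hC⟩ := hf
    refine ⟨|c| * C, fun t ht => ?_⟩
    rw [Pi.smul_apply, smul_eq_mul, abs_mul]
    exact mul_le_mul_of_nonneg_left (hC t ht) (abs_nonneg c)

theorem supAbs_le_iff (hs : ∀ a ∈ s, 0 < a) (hf : f ∈ expPolySpace s) {c : ℝ} :
    supAbs f ≤ c ↔ ∀ t, 0 ≤ t → |f t| ≤ c := by
  obtain ⟨C, hC⟩ := exists_abs_le hs hf
  have hbdd : BddAbove ((fun t => |f t|) '' Set.Ici 0) := ⟨C, Set.forall_mem_image.mpr hC⟩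
  rw [supAbs, csSup_le_iff hbdd (Set.nonempty_Ici.image _)]
  exact Set.forall_mem_image

theorem deriv_add_smul_expMonomial_mem {a b : ℝ} {m : ℕ} (hm : m < (a ::ₘ s).count b) :
    deriv (expMonomial b m) + a • expMonomial b m ∈ expPolySpace s := by
  have hderiv : deriv (expMonomial b m) + a • expMonomial b m =
      (m : ℝ) • expMonomial b (m - 1) + (a - b) • expMonomial b m := by
    funext t
    simp only [Pi.add_apply, Pi.smul_apply, smul_eq_mul, (hasDerivAt_expMonomial b m t).deriv]
    ring
  rw [hderiv]
  rcases eq_or_ne b a with rfl | hba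
  · rw [Multiset.count_cons_self] at hm
    rw [sub_self, zero_smul, add_zero]
    rcases m with _ | k
    · simp
    · exact Submodule.smul_mem _ _ (expMonomial_mem (Nat.succ_lt_succ_iff.mp hm))
  · rw [Multiset.count_cons_of_ne hba] at hm
    exact add_mem (Submodule.smul_mem _ _ (expMonomial_mem ((Nat.sub_le m 1).trans_lt hm)))
      (Submodule.smul_mem _ _ (expMonomial_mem hm))

theorem deriv_add_smul_mem {a : ℝ} (hf : f ∈ expPolySpace (a ::ₘ s)) :
    deriv f + a • f ∈ expPolySpace s := by
  induction hf using Submodule.span_induction with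
  | mem _ hx =>
    obtain ⟨b, m, hm, rfl⟩ := hx
    exact deriv_add_smul_expMonomial_mem hm
  | zero => simp
  | add f g hfs hgs hf hg =>
    have hadd : deriv (f + g) = deriv f + deriv g :=
      funext fun t => deriv_add (differentiable hfs t) (differentiable hgs t)
    rw [hadd, smul_add, add_add_add_comm]
    exact add_mem hf hg
  | smul c f hfs hf =>
    have hsmul : deriv (c • f) = c • deriv f :=
      funext fun t => deriv_const_smul c (differentiable hfs t)
    rw [hsmul, smul_comm a c, ← smul_add]
    exact Submodule.smul_mem _ c hf

theorem eq_zero_of_zeros (hf : f ∈ expPolySpace s) {n : ℕ} (hn : s.card = n) {z : Fin n → ℝ}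
    (hz : StrictMono z) (hfz : ∀ i, f (z i) = 0) : f = 0 := by
  induction s using Multiset.induction_on generalizing f n with
  | empty => simpa [expPolySpace] using hf
  | cons a s ih =>
    obtain rfl : n = s.card + 1 := hn.symm.trans (Multiset.card_cons a s)
    obtain ⟨w, hw, hfw⟩ := exists_strictMono_zeros_deriv_add_mul (differentiable hf) a hz hfz
    have hode : deriv f + a • f = 0 := ih (deriv_add_smul_mem hf) rfl hw hfw
    exact eq_zero_of_deriv_add_mul_eq_zero (differentiable hf) (congrFun hode) (hfz 0)

theorem isChebyshevSpace {n : ℕ} (hn : s.card = n) : IsChebyshevSpace n (expPolySpace s) where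
  differentiable _ hf := differentiable hf
  comp_add_const_mem _ hf := comp_add_const_mem hf
  eq_zero_of_zeros _ hf _ := eq_zero_of_zeros hf hn

end expPolySpace

/-! ### The indexing of the basis of `P_h` -/

section FiberRank

variable {ι α : Type*}

/-- The number of indices before `i` in its fiber under `h`: the power of `t` in the basis
function of `expPoly` with index `i`. -/
noncomputable def fiberRank [LT ι] (h : ι → α) (i : ι) : ℕ :=
  Nat.card {j : ι // j < i ∧ h j = h i}

theorem fiberRank_lt_fiberRank [Preorder ι] [Finite ι] {h : ι → α} {i j : ι} (hij : i < j)
    (hfiber : h i = h j) :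
    fiberRank h i < fiberRank h j := by
  refine Set.ncard_lt_ncard (s := {k | k < i ∧ h k = h i}) (t := {k | k < j ∧ h k = h j}) ?_
  have hsub : {k | k < i ∧ h k = h i} ⊆ {k | k < j ∧ h k = h j} :=
    fun k hk => ⟨hk.1.trans hij, hk.2.trans hfiber⟩
  exact (Set.ssubset_iff_of_subset hsub).mpr ⟨i, ⟨hij, hfiber⟩, fun hi => lt_irrefl i hi.1⟩

variable [LinearOrder ι] [Fintype ι] [DecidableEq α]

theorem fiberRank_lt_card_fiber (h : ι → α) (i : ι) :
    fiberRank h i < (Finset.univ.filter fun j => h j = h i).card := by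
  rw [fiberRank, Nat.card_eq_fintype_card, Fintype.card_subtype]
  refine Finset.card_lt_card ((Finset.ssubset_iff_of_subset fun j hj => ?_).mpr ⟨i, ?_, ?_⟩)
  · simpa using (Finset.mem_filter.mp hj).2.2
  · simp
  · simp

theorem image_fiberRank_fiber (h : ι → α) (a : α) :
    (Finset.univ.filter fun i => h i = a).image (fiberRank h) =
      Finset.range (Finset.univ.filter fun i => h i = a).card := by
  refine Finset.eq_of_subset_of_card_le (fun m hm => ?_) ?_
  · obtain ⟨i, hi, rfl⟩ := Finset.mem_image.mp hm
    obtain rfl := (Finset.mem_filter.mp hi).2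
    exact Finset.mem_range.mpr (fiberRank_lt_card_fiber h i)
  · have hinj : Set.InjOn (fiberRank h) (Finset.univ.filter fun i => h i = a) := by
      intro i hi j hj hrank
      have hfiber : h i = h j :=
        (Finset.mem_filter.mp hi).2.trans (Finset.mem_filter.mp hj).2.symm
      rcases lt_trichotomy i j with hij | hij | hij
      · exact absurd hrank (fiberRank_lt_fiberRank hij hfiber).ne
      · exact hij
      · exact absurd hrank (fiberRank_lt_fiberRank hij hfiber.symm).ne'
    rw [Finset.card_range, Finset.card_image_of_injOn hinj]

theorem lt_count_map_iff_exists_fiberRank (h : ι → α) (a : α) (m : ℕ) :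
    m < (Finset.univ.val.map h).count a ↔ ∃ i, h i = a ∧ fiberRank h i = m := by
  have hcount : (Finset.univ.val.map h).count a = (Finset.univ.filter fun i => h i = a).card := by
    simp only [Multiset.count_map, eq_comm (a := a)]
    rfl
  rw [hcount, ← Finset.mem_range, ← image_fiberRank_fiber]
  simp

end FiberRank

theorem expPoly_eq_expPolySpace (d : ℕ) (h : Fin d → ℝ) :
    expPoly d h = expPolySpace (Finset.univ.val.map h) := by
  have hgen : {f | ∃ a m, m < (Finset.univ.val.map h).count a ∧ f = expMonomial a m} =
      Set.range fun i => expMonomial (h i) (fiberRank h i) := by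
    ext f
    simp only [lt_count_map_iff_exists_fiberRank, Set.mem_ofPred_eq, Set.mem_range]
    constructor
    · rintro ⟨_, _, ⟨i, rfl, rfl⟩, rfl⟩
      exact ⟨i, rfl⟩
    · rintro ⟨i, rfl⟩
      exact ⟨_, _, ⟨i, rfl, rfl⟩, rfl⟩
  ext p
  rw [SetLike.mem_coe, expPolySpace, hgen, Submodule.mem_span_range_iff_exists_fun]
  refine exists_congr fun c => ?_
  rw [eq_comm, funext_iff]
  simp [expMonomial, fiberRank, mul_assoc]

theorem kappa_eq_sInf_ratiosAtZero {d : ℕ} {h : Fin d → ℝ} (hpos : ∀ i, 0 < h i) (ε : ℝ) :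
    kappa d h ε = sInf (ratiosAtZero ε (expPolySpace (Finset.univ.val.map h))) := by
  have hexp : ∀ a ∈ Finset.univ.val.map h, 0 < a :=
    Multiset.forall_mem_map_iff.mpr fun i _ => hpos i
  have hset : ratiosAtZero ε (expPolySpace (Finset.univ.val.map h)) =
      {y | ∃ p ∈ expPoly d h, supAbs p ≤ 1 ∧ ε * p 0 < deriv p 0 ∧
        y = (1 - p 0) / (deriv p 0 - ε * p 0)} := by
    rw [expPoly_eq_expPolySpace]
    ext y
    exact exists_congr fun p => and_congr_right fun hp =>
      and_congr_left' (expPolySpace.supAbs_le_iff hexp hp).symm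
  rw [kappa, hset]

theorem kappa_eq_chebyshev_inf_general {n : ℕ} {h : Fin (n + 2) → ℝ} (hpos : ∀ i, 0 < h i)
    (ε : ℝ) {T : ℝ → ℝ} (hT : T ∈ expPoly (n + 2) h) (hTnorm : supAbs T = 1)
    {ν : Fin (n + 2) → ℝ} (hν0 : ν 0 = 0) (hνmono : StrictMono ν)
    (hTalt : ∀ k, T (ν k) = (-1) ^ ((k : ℕ) + 1)) :
    kappa (n + 2) h ε =
      sInf {y : ℝ | ∃ t ∈ Set.Icc (0 : ℝ) (ν 1),
          ε * T t < deriv T t ∧ y = (1 - T t) / (deriv T t - ε * T t)} := by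
  have hexp : ∀ a ∈ Finset.univ.val.map h, 0 < a :=
    Multiset.forall_mem_map_iff.mpr fun i _ => hpos i
  have hV : IsChebyshevSpace (n + 2) (expPolySpace (Finset.univ.val.map h)) :=
    expPolySpace.isChebyshevSpace (by simp)
  rw [expPoly_eq_expPolySpace, SetLike.mem_coe] at hT
  have hT1 : ∀ t, 0 ≤ t → |T t| ≤ 1 := (expPolySpace.supAbs_le_iff hexp hT).mp hTnorm.le
  rw [kappa_eq_sInf_ratiosAtZero hpos, hV.sInf_ratiosAtZero_eq hT hT1 hνmono hν0.ge hTalt, hν0]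
  rfl

/-- If `T` is the `h`-Chebyshev polynomial of the system `P_h` (sup norm `1`, with
alternance points `0 = ν₁ < ν₂ < ⋯ < ν_d`, `T(νₖ) = (−1)ᵏ`), then `κ(h, ε)` equals
the infimum of `(1 − T(t))/(T'(t) − ε T(t))` over `t ∈ [0, ν₂]` with `T'(t) > ε T(t)`. -/
theorem kappa_eq_chebyshev_inf (d : ℕ) (hd : 2 ≤ d) (h : Fin d → ℝ)
    (hmono : Monotone h) (hpos : ∀ i, 0 < h i) (hone : ∀ i, h i ≤ 1)
    (ε : ℝ) (hε : 0 < ε)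
    (T : ℝ → ℝ) (hT : T ∈ expPoly d h) (hTnorm : supAbs T = 1)
    (ν : Fin d → ℝ) (hν0 : ν ⟨0, by omega⟩ = 0) (hνmono : StrictMono ν)
    (hTalt : ∀ k : Fin d, T (ν k) = (-1 : ℝ) ^ ((k : ℕ) + 1)) :
    kappa d h ε =
      sInf {y : ℝ | ∃ t ∈ Set.Icc (0 : ℝ) (ν ⟨1, by omega⟩),
          ε * T t < deriv T t ∧ y = (1 - T t) / (deriv T t - ε * T t)} := by
  obtain ⟨n, rfl⟩ := Nat.exists_eq_add_of_le' hd
  exact kappa_eq_chebyshev_inf_general hpos ε hT hTnorm hν0 hνmono hTalt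
end

section
/- Let a > 0, M > 0, ε > 0, and let f : ℝ → ℝ be twice continuously differentiable on [0, a] with f(0) = 0, f'(0) = 0, 0 ≤ f''(t) ≤ M for all t ∈ [0, a], f(a) ≤ 1, and f'(a) > ε·(1 − f(a)). Then f(a) / (f'(a) − ε·(1 − f(a))) ≥ 2ε / (M + 2ε²). -/
/-!
The derivative of `2 M f - f' ^ 2` is `2 f' (M - f'')`, so this energy is nondecreasing wherever
`f' ≥ 0` and `f'' ≤ M`. Comparing its values at `0` and `a` gives `f' a ^ 2 ≤ 2 M f a`, while
`4 ε f' a - 4 ε ^ 2 ≤ f' a ^ 2` because `(f' a - 2 ε) ^ 2 ≥ 0`. Together these are the claimed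
bound with its denominators cleared.
-/

open Set

section MonotoneEnergy

variable {s : Set ℝ} {M : ℝ} {f f' f'' : ℝ → ℝ}

theorem monotoneOn_of_forall_hasDerivWithinAt_nonneg (hs : Convex ℝ s)
    (hf : ∀ x ∈ s, HasDerivWithinAt f (f' x) s x) (hf'_nonneg : ∀ x ∈ s, 0 ≤ f' x) :
    MonotoneOn f s :=
  monotoneOn_of_hasDerivWithinAt_nonneg hs (HasDerivWithinAt.continuousOn hf)
    (fun x hx => (hf x (interior_subset hx)).mono interior_subset)
    fun x hx => hf'_nonneg x (interior_subset hx)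

theorem nonneg_of_forall_hasDerivWithinAt_nonneg {a b : ℝ}
    (hf : ∀ x ∈ Icc a b, HasDerivWithinAt f (f' x) (Icc a b) x)
    (hf'_nonneg : ∀ x ∈ Icc a b, 0 ≤ f' x) (hfa : 0 ≤ f a) :
    ∀ x ∈ Icc a b, 0 ≤ f x := by
  intro x hx
  have f_mono : MonotoneOn f (Icc a b) :=
    monotoneOn_of_forall_hasDerivWithinAt_nonneg (convex_Icc a b) hf hf'_nonneg
  exact hfa.trans (f_mono (left_mem_Icc.2 (hx.1.trans hx.2)) hx hx.1)

theorem monotoneOn_two_mul_mul_sub_deriv_sq (hs : Convex ℝ s)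
    (hf : ∀ x ∈ s, HasDerivWithinAt f (f' x) s x)
    (hf' : ∀ x ∈ s, HasDerivWithinAt f' (f'' x) s x)
    (hf'_nonneg : ∀ x ∈ s, 0 ≤ f' x) (hf''_le : ∀ x ∈ s, f'' x ≤ M) :
    MonotoneOn (fun x => 2 * M * f x - f' x ^ 2) s := by
  have energy_deriv (x : ℝ) (hx : x ∈ s) :
      HasDerivWithinAt (fun x => 2 * M * f x - f' x ^ 2) (2 * f' x * (M - f'' x)) s x := by
    refine (((hf x hx).const_mul (2 * M)).fun_sub ((hf' x hx).fun_pow 2)).congr_deriv ?_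
    push_cast
    ring
  refine monotoneOn_of_forall_hasDerivWithinAt_nonneg hs energy_deriv fun x hx => ?_
  exact mul_nonneg (mul_nonneg zero_le_two (hf'_nonneg x hx)) (sub_nonneg.2 (hf''_le x hx))

theorem deriv_sq_sub_deriv_sq_le {a b : ℝ} (hab : a ≤ b)
    (hf : ∀ x ∈ Icc a b, HasDerivWithinAt f (f' x) (Icc a b) x)
    (hf' : ∀ x ∈ Icc a b, HasDerivWithinAt f' (f'' x) (Icc a b) x)
    (hf'_nonneg : ∀ x ∈ Icc a b, 0 ≤ f' x) (hf''_le : ∀ x ∈ Icc a b, f'' x ≤ M) :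
    f' b ^ 2 - f' a ^ 2 ≤ 2 * M * (f b - f a) := by
  have energy_le : 2 * M * f a - f' a ^ 2 ≤ 2 * M * f b - f' b ^ 2 :=
    monotoneOn_two_mul_mul_sub_deriv_sq (convex_Icc a b) hf hf' hf'_nonneg hf''_le
      (left_mem_Icc.2 hab) (right_mem_Icc.2 hab) hab
  linarith

end MonotoneEnergy

theorem two_mul_div_le_div_of_sq_le {M ε y p : ℝ} (hM : 0 < M) (hp : p ^ 2 ≤ 2 * M * y)
    (hεp : ε * (1 - y) < p) :
    2 * ε / (M + 2 * ε ^ 2) ≤ y / (p - ε * (1 - y)) := by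
  have am_gm : 2 * (2 * ε) * p ≤ (2 * ε) ^ 2 + p ^ 2 := two_mul_le_add_sq (2 * ε) p
  rw [div_le_div_iff₀ (by positivity) (sub_pos.2 hεp)]
  calc
    2 * ε * (p - ε * (1 - y)) = 2 * ε * p - 2 * ε ^ 2 + 2 * ε ^ 2 * y := by ring
    _ ≤ M * y + 2 * ε ^ 2 * y := by linarith
    _ = y * (M + 2 * ε ^ 2) := by ring

theorem ratio_lower_bound_general {a M ε : ℝ} (ha : 0 ≤ a) (hM : 0 < M) {f f' f'' : ℝ → ℝ}
    (hf : ∀ t ∈ Icc 0 a, HasDerivWithinAt f (f' t) (Icc 0 a) t)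
    (hf' : ∀ t ∈ Icc 0 a, HasDerivWithinAt f' (f'' t) (Icc 0 a) t)
    (hf0 : f 0 = 0) (hf'0 : f' 0 = 0)
    (hf'_nonneg : ∀ t ∈ Icc 0 a, 0 ≤ f' t) (hf''_le : ∀ t ∈ Icc 0 a, f'' t ≤ M)
    (hfa' : ε * (1 - f a) < f' a) :
    2 * ε / (M + 2 * ε ^ 2) ≤ f a / (f' a - ε * (1 - f a)) := by
  have deriv_sq_le : f' a ^ 2 ≤ 2 * M * f a := by
    simpa [hf0, hf'0] using deriv_sq_sub_deriv_sq_le ha hf hf' hf'_nonneg hf''_le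
  exact two_mul_div_le_div_of_sq_le hM deriv_sq_le hfa'

/-- Analytic core of the discretization-step lower bound: if `f` is twice continuously
differentiable on `[0, a]` (with derivative `f'` and second derivative `f''` there),
`f(0) = f'(0) = 0`, `0 ≤ f'' ≤ M` on `[0, a]`, `f(a) ≤ 1` and `f'(a) > ε (1 − f(a))`,
then `f(a) / (f'(a) − ε (1 − f(a))) ≥ 2ε / (M + 2ε²)`. -/
theorem ratio_lower_bound (a M ε : ℝ) (ha : 0 < a) (hM : 0 < M) (hε : 0 < ε)
    (f f' f'' : ℝ → ℝ)
    (hf' : ∀ t ∈ Set.Icc (0 : ℝ) a, HasDerivAt f (f' t) t)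
    (hf'' : ∀ t ∈ Set.Icc (0 : ℝ) a, HasDerivAt f' (f'' t) t)
    (hcont : ContinuousOn f'' (Set.Icc (0 : ℝ) a))
    (hf0 : f 0 = 0) (hf'0 : f' 0 = 0)
    (hbd : ∀ t ∈ Set.Icc (0 : ℝ) a, 0 ≤ f'' t ∧ f'' t ≤ M)
    (hfa : f a ≤ 1) (hfa' : ε * (1 - f a) < f' a) :
    2 * ε / (M + 2 * ε ^ 2) ≤ f a / (f' a - ε * (1 - f a)) := by
  have hf''_within t (ht : t ∈ Icc 0 a) := (hf'' t ht).hasDerivWithinAt (s := Icc 0 a)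
  have hf'_nonneg : ∀ t ∈ Icc 0 a, 0 ≤ f' t :=
    nonneg_of_forall_hasDerivWithinAt_nonneg hf''_within (fun t ht => (hbd t ht).1) hf'0.ge
  exact ratio_lower_bound_general ha.le hM (fun t ht => (hf' t ht).hasDerivWithinAt) hf''_within
    hf0 hf'0 hf'_nonneg (fun t ht => (hbd t ht).2) hfa'
end
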